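/- Capacity of universal LDCs (Theorem 1): for all integers N ≥ 2 and K ≥ 1, the supremum over all code lengths M ∈ ℕ and over all universal locally decodable codes (ULDCs) with locality N and K source symbols of the symbol rate R_s = L_w/L_x equals C*(N,K) = N·(1 + 1/N + 1/N² + ⋯ + 1/N^{K−1})^{−1}, and this supremum is attained by some ULDC. -/

import Mathlib

open scoped BigOperators

noncomputable section

/-- A finite probability space: a finite type together with a probability mass function. -/
structure FinProbSpace where
  Ω : Type
  [fin : Fintype Ω]
  p : Ω → ℝ
  nonneg : ∀ ω, 0 ≤ p ω
  sum_one : ∑ ω, p ω = 1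

attribute [instance] FinProbSpace.fin

namespace FinProbSpace

variable (P : FinProbSpace)

/-- Probability that the random variable `X` takes the value `a`. -/
def prob {α : Type} [DecidableEq α] (X : P.Ω → α) (a : α) : ℝ :=
  ∑ ω, if X ω = a then P.p ω else 0

/-- Shannon entropy (in bits) of a finitely valued random variable. -/
def H {α : Type} [Fintype α] [DecidableEq α] (X : P.Ω → α) : ℝ :=
  ∑ a, -(P.prob X a * Real.logb 2 (P.prob X a))

/-- Conditional Shannon entropy `H(X | Y) = H(X, Y) - H(Y)` (in bits). -/
def condH {α β : Type} [Fintype α] [DecidableEq α] [Fintype β] [DecidableEq β]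
    (X : P.Ω → α) (Y : P.Ω → β) : ℝ :=
  P.H (fun ω => (X ω, Y ω)) - P.H Y

/-- The tuple random variable `(X_i)_{i ∈ ι}`. -/
def tuple {ι V : Type} (X : ι → P.Ω → V) : P.Ω → ι → V := fun ω i => X i ω

/-- Joint (mutual) independence of a finite family of random variables. -/
def iIndep {ι V : Type} [Fintype ι] [DecidableEq ι] [DecidableEq V] (X : ι → P.Ω → V) : Prop :=
  ∀ a : ι → V, P.prob (P.tuple X) a = ∏ i, P.prob (X i) (a i)

/-- `X` and `Y` contain the same information about everything beyond `Z`: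
`H(X | Y, Z) = H(Y | X, Z) = 0`. -/
def sameInfo {α β γ : Type} [Fintype α] [DecidableEq α] [Fintype β] [DecidableEq β]
    [Fintype γ] [DecidableEq γ] (X : P.Ω → α) (Y : P.Ω → β) (Z : P.Ω → γ) : Prop :=
  P.condH X (fun ω => (Y ω, Z ω)) = 0 ∧ P.condH Y (fun ω => (X ω, Z ω)) = 0

end FinProbSpace

/-- A locally decodable code with `K` source symbols of entropy `Lw`, `M` coded symbols of
entropy `Lx`, and locality `N`. -/
structure LDC (K N M : ℕ) (Lw Lx : ℝ) where
  P : FinProbSpace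
  V : Type
  [fV : Fintype V]
  [dV : DecidableEq V]
  V' : Type
  [fV' : Fintype V']
  [dV' : DecidableEq V']
  /-- the source symbols -/
  W : Fin K → P.Ω → V
  /-- the coded symbols -/
  X : Fin M → P.Ω → V'
  indep : P.iIndep W
  HW : ∀ k, P.H (W k) = Lw
  coded_fn : ∀ m, ∃ f : (Fin K → V) → V', ∀ ω, X m ω = f (fun k => W k ω)
  HX : ∀ m, P.H (X m) = Lx
  /-- the decoding supersets -/
  decSets : Fin K → Finset (Finset (Fin M))
  decSets_nonempty : ∀ k, (decSets k).Nonempty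
  decSets_card : ∀ k, ∀ s ∈ decSets k, s.card = N
  decodes : ∀ k, ∀ s ∈ decSets k,
    P.condH (W k) (P.tuple fun i : {x // x ∈ s} => X i.1) = 0

attribute [instance] LDC.fV LDC.dV LDC.fV' LDC.dV'

/-- A universal LDC: every coded symbol appears in some decoding set of every source symbol. -/
def LDC.IsUniversal {K N M : ℕ} {Lw Lx : ℝ} (C : LDC K N M Lw Lx) : Prop :=
  ∀ (m : Fin M) (k : Fin K), ∃ s ∈ C.decSets k, m ∈ s

/-- A perfectly smooth LDC: for each source symbol, every coded symbol lies in the same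
number of decoding sets. -/
def LDC.IsSmooth {K N M : ℕ} {Lw Lx : ℝ} (C : LDC K N M Lw Lx) : Prop :=
  ∀ (k : Fin K) (m m' : Fin M),
    ((C.decSets k).filter (fun s => m ∈ s)).card =
      ((C.decSets k).filter (fun s => m' ∈ s)).card

/-- `C*(N, K) = N (1 + 1/N + ⋯ + 1/N^{K-1})⁻¹`. -/
def Cstar (N K : ℕ) : ℝ := N / (∑ j ∈ Finset.range K, (1 / (N : ℝ)) ^ j)

/-- An `N`-query information retrieval scheme with `K` messages of entropy `Lw` and
answer sets of sizes `Mn n` with answers of entropy `Lx`. -/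
structure IRScheme (K N : ℕ) (Mn : Fin N → ℕ) (Lw Lx : ℝ) where
  P : FinProbSpace
  V : Type
  [fV : Fintype V]
  [dV : DecidableEq V]
  V' : Type
  [fV' : Fintype V']
  [dV' : DecidableEq V']
  /-- the messages -/
  W : Fin K → P.Ω → V
  /-- `A n m` is the `m`-th possible answer of database `n` -/
  A : (n : Fin N) → Fin (Mn n) → P.Ω → V'
  indep : P.iIndep W
  HW : ∀ k, P.H (W k) = Lw
  ans_fn : ∀ n m, ∃ f : (Fin K → V) → V', ∀ ω, A n m ω = f (fun k => W k ω)
  HA : ∀ n m, P.H (A n m) = Lx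
  /-- the decoding supersets: each decoding set consists of one answer index per database -/
  Q : Fin K → Finset ((n : Fin N) → Fin (Mn n))
  Q_nonempty : ∀ k, (Q k).Nonempty
  decodes : ∀ k, ∀ q ∈ Q k, P.condH (W k) (P.tuple fun n => A n (q n)) = 0

attribute [instance] IRScheme.fV IRScheme.dV IRScheme.fV' IRScheme.dV'

/-- A repudiative (RIR_max) scheme: every possible answer of every database appears in some
decoding set of every message. -/
def IRScheme.IsRIR {K N : ℕ} {Mn : Fin N → ℕ} {Lw Lx : ℝ} (C : IRScheme K N Mn Lw Lx) : Prop :=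
  ∀ (n : Fin N) (m : Fin (Mn n)) (k : Fin K), ∃ q ∈ C.Q k, q n = m

/-- A perfectly private (PIR_max) scheme: for each message there is a distribution on its
decoding sets such that the marginal distribution of the query to each database does not
depend on the message. -/
def IRScheme.IsPIR {K N : ℕ} {Mn : Fin N → ℕ} {Lw Lx : ℝ} (C : IRScheme K N Mn Lw Lx) : Prop :=
  ∃ μ : Fin K → ((n : Fin N) → Fin (Mn n)) → ℝ,
    (∀ k q, 0 ≤ μ k q) ∧ (∀ k, ∑ q ∈ C.Q k, μ k q = 1) ∧
    (∀ (k k' : Fin K) (n : Fin N) (m : Fin (Mn n)),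
      ∑ q ∈ (C.Q k).filter (fun q => q n = m), μ k q =
        ∑ q ∈ (C.Q k').filter (fun q => q n = m), μ k' q)

/-- `C_K(N) = (1 + 1/N + ⋯ + 1/N^{K-1})⁻¹`, the capacity of PIR. -/
def CK (N K : ℕ) : ℝ := (∑ j ∈ Finset.range K, (1 / (N : ℝ)) ^ j)⁻¹

/-!
Converse: write `h_Z(m)` for the entropy of the coded symbol `m` given the source symbols in `Z`.
If `k ∉ Z` and `S` is a decoding set of `k` through `m`, then the coded symbols in `S` reveal `W_k`
and then still contain `X_m`, so `Lw + h_{Z ∪ k}(m) ≤ ∑ i ∈ S, h_Z(i)`, and some `i ∈ S` satisfies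
`h_Z(i) ≥ (Lw + h_{Z ∪ k}(m)) / N`. Descending from the set of all source symbols to `∅` produces a
coded symbol with `Lx ≥ (Lw / N) (1 + 1/N + ⋯ + 1/N^{K-1})`.

Achievability: in the Tian–Sun–Chen private information retrieval code a source symbol is a word
with one letter for each nonzero element of a group `G` of order `N`, and the answer at a point `s`
of the grid `G ^ K` is the sum over `k` of the letter of source symbol `k` at position `s k`, a
letter at position `0` being read as zero. Along a line in direction `k` only the contribution of
source symbol `k` changes, so the line decodes it. The answers are not equally long, since the one
at the origin is empty; running one copy of the code for every translate of the grid makes all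
coded symbols equally long.
-/

theorem mul_log_sub_log_le_sub {p q : ℝ} (hp : 0 < p) (hq : 0 < q) :
    p * (Real.log q - Real.log p) ≤ q - p := by
  calc p * (Real.log q - Real.log p) = p * Real.log (q / p) := by
        rw [Real.log_div hq.ne' hp.ne']
    _ ≤ p * (q / p - 1) :=
        mul_le_mul_of_nonneg_left (Real.log_le_sub_one_of_pos (div_pos hq hp)) hp.le
    _ = q - p := by field_simp

namespace FinProbSpace

variable (P : FinProbSpace) {α β γ : Type}

section Probability

variable [DecidableEq α]

theorem prob_nonneg (X : P.Ω → α) (a : α) : 0 ≤ P.prob X a :=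
  Finset.sum_nonneg fun ω _ => by split_ifs <;> simp [P.nonneg ω]

theorem le_prob_apply (X : P.Ω → α) (ω : P.Ω) : P.p ω ≤ P.prob X (X ω) := by
  have h := Finset.single_le_sum (f := fun ω' => if X ω' = X ω then P.p ω' else 0)
    (fun ω' _ => by split_ifs <;> simp [P.nonneg ω']) (Finset.mem_univ ω)
  simpa only [prob, if_true] using h

theorem exists_of_prob_pos {X : P.Ω → α} {a : α} (h : 0 < P.prob X a) :
    ∃ ω, X ω = a ∧ 0 < P.p ω := by
  obtain ⟨ω, -, hω⟩ := Finset.exists_ne_zero_of_sum_ne_zero h.ne'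
  obtain ⟨hX, hp⟩ := ite_ne_right_iff.1 hω
  exact ⟨ω, hX, (P.nonneg ω).lt_of_ne' hp⟩

theorem sum_p_mul_comp [Fintype α] (X : P.Ω → α) (F : α → ℝ) :
    ∑ ω, P.p ω * F (X ω) = ∑ a, P.prob X a * F a := by
  simp only [prob, Finset.sum_mul]
  rw [Finset.sum_comm]
  exact Finset.sum_congr rfl fun ω _ => by simp

theorem sum_prob [Fintype α] (X : P.Ω → α) : ∑ a, P.prob X a = 1 := by
  simpa [P.sum_one] using (P.sum_p_mul_comp X fun _ => 1).symm

theorem sum_prob_prodMk [Fintype α] [DecidableEq β] (X : P.Ω → α) (Y : P.Ω → β) (b : β) :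
    ∑ a, P.prob (fun ω => (X ω, Y ω)) (a, b) = P.prob Y b := by
  simp only [prob, Prod.mk.injEq]
  rw [Finset.sum_comm]
  refine Finset.sum_congr rfl fun ω _ => ?_
  by_cases h : Y ω = b <;> simp [h]

theorem prob_apply_le_of_factorsThrough [DecidableEq β] {X : P.Ω → α} {Y : P.Ω → β}
    (h : Y.FactorsThrough X) (ω : P.Ω) : P.prob X (X ω) ≤ P.prob Y (Y ω) := by
  refine Finset.sum_le_sum fun ω' _ => ?_
  by_cases hX : X ω' = X ω
  · simp [hX, h hX]
  · simp only [hX, if_false]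
    split_ifs <;> simp [P.nonneg ω']

end Probability

section Entropy

variable [Fintype α] [DecidableEq α] [Fintype β] [DecidableEq β] [Fintype γ] [DecidableEq γ]

theorem H_eq_sum (X : P.Ω → α) : P.H X = ∑ ω, P.p ω * -Real.logb 2 (P.prob X (X ω)) := by
  rw [P.sum_p_mul_comp X fun a => -Real.logb 2 (P.prob X a)]
  simp [H]

theorem H_mono {X : P.Ω → α} {Y : P.Ω → β} (h : Y.FactorsThrough X) : P.H Y ≤ P.H X := by
  rw [H_eq_sum, H_eq_sum]
  refine Finset.sum_le_sum fun ω _ => ?_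
  rcases (P.nonneg ω).eq_or_lt with h0 | hpos
  · simp [← h0]
  · exact mul_le_mul_of_nonneg_left (neg_le_neg <| Real.logb_le_logb_of_le one_lt_two
      (hpos.trans_le (P.le_prob_apply X ω)) (P.prob_apply_le_of_factorsThrough h ω)) hpos.le

theorem H_congr {X : P.Ω → α} {Y : P.Ω → β} (h : ∀ ω ω', X ω = X ω' ↔ Y ω = Y ω') :
    P.H X = P.H Y :=
  le_antisymm (P.H_mono fun ω ω' => (h ω ω').2) (P.H_mono fun ω ω' => (h ω ω').1)

theorem H_const (a : α) : P.H (fun _ => a) = 0 := by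
  simp [H_eq_sum, prob, P.sum_one]

/-- **Gibbs' inequality** -/
theorem H_le_sum_neg_logb (X : P.Ω → α) {q : α → ℝ} (hq : ∀ a, 0 ≤ q a) (hsum : ∑ a, q a ≤ 1)
    (hpos : ∀ ω, 0 < P.p ω → 0 < q (X ω)) :
    P.H X ≤ ∑ ω, P.p ω * -Real.logb 2 (q (X ω)) := by
  have hlog2 : 0 < Real.log 2 := Real.log_pos one_lt_two
  have hterm (a : α) : P.prob X a * -Real.logb 2 (P.prob X a) ≤
      P.prob X a * -Real.logb 2 (q a) + (q a - P.prob X a) / Real.log 2 := by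
    rcases (P.prob_nonneg X a).eq_or_lt with h0 | h0
    · simpa [← h0] using div_nonneg (hq a) hlog2.le
    · obtain ⟨ω, rfl, hω⟩ := P.exists_of_prob_pos h0
      calc P.prob X (X ω) * -Real.logb 2 (P.prob X (X ω))
          = P.prob X (X ω) * -Real.logb 2 (q (X ω)) +
              P.prob X (X ω) * (Real.log (q (X ω)) - Real.log (P.prob X (X ω))) / Real.log 2 := by
            simp only [Real.logb]; ring
        _ ≤ _ := by
            gcongr
            exact mul_log_sub_log_le_sub h0 (hpos ω hω)
  calc P.H X = ∑ a, P.prob X a * -Real.logb 2 (P.prob X a) := by simp [H]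
    _ ≤ ∑ a, P.prob X a * -Real.logb 2 (q a) + (∑ a, q a - 1) / Real.log 2 := by
        rw [← P.sum_prob X, ← Finset.sum_sub_distrib, Finset.sum_div, ← Finset.sum_add_distrib]
        exact Finset.sum_le_sum fun a _ => hterm a
    _ ≤ ∑ a, P.prob X a * -Real.logb 2 (q a) :=
        add_le_of_nonpos_right (div_nonpos_of_nonpos_of_nonneg (by linarith) hlog2.le)
    _ = ∑ ω, P.p ω * -Real.logb 2 (q (X ω)) :=
        (P.sum_p_mul_comp X fun a => -Real.logb 2 (q a)).symm

theorem sum_prob_mul_prob_div_prob (X : P.Ω → α) (Y : P.Ω → β) (Z : P.Ω → γ) :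
    ∑ x : α × β × γ, P.prob (fun ω => (X ω, Z ω)) (x.1, x.2.2) *
      P.prob (fun ω => (Y ω, Z ω)) x.2 / P.prob Z x.2.2 = 1 := by
  calc _ = ∑ c, ∑ a, ∑ b, P.prob (fun ω => (X ω, Z ω)) (a, c) *
        P.prob (fun ω => (Y ω, Z ω)) (b, c) / P.prob Z c := by
        simp only [Fintype.sum_prod_type]
        rw [Finset.sum_congr rfl fun a _ => Finset.sum_comm, Finset.sum_comm]
    _ = ∑ c, P.prob Z c * P.prob Z c / P.prob Z c := by
        simp only [← Finset.sum_div, ← Finset.mul_sum, ← Finset.sum_mul, P.sum_prob_prodMk]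
    _ = 1 := by simp only [mul_self_div_self, P.sum_prob]

theorem condH_prodMk_right_le (X : P.Ω → α) (Y : P.Ω → β) (Z : P.Ω → γ) :
    P.condH X (fun ω => (Y ω, Z ω)) ≤ P.condH X Z := by
  -- Gibbs' inequality against the distribution making `X` and `Y` independent given `Z`.
  let q : α × β × γ → ℝ := fun x => P.prob (fun ω => (X ω, Z ω)) (x.1, x.2.2) *
    P.prob (fun ω => (Y ω, Z ω)) x.2 / P.prob Z x.2.2
  have hpos {δ : Type} [DecidableEq δ] (U : P.Ω → δ) {ω : P.Ω} (hω : 0 < P.p ω) :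
      0 < P.prob U (U ω) := hω.trans_le (P.le_prob_apply U ω)
  have hgibbs : P.H (fun ω => (X ω, Y ω, Z ω)) ≤
      ∑ ω, P.p ω * -Real.logb 2 (q (X ω, Y ω, Z ω)) :=
    P.H_le_sum_neg_logb _
      (fun x => div_nonneg (mul_nonneg (P.prob_nonneg _ _) (P.prob_nonneg _ _))
        (P.prob_nonneg _ _))
      (P.sum_prob_mul_prob_div_prob X Y Z).le
      (fun ω hω => div_pos (mul_pos (hpos (fun ω => (X ω, Z ω)) hω)
        (hpos (fun ω => (Y ω, Z ω)) hω)) (hpos Z hω))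
  have hcross : ∑ ω, P.p ω * -Real.logb 2 (q (X ω, Y ω, Z ω)) =
      P.H (fun ω => (X ω, Z ω)) + P.H (fun ω => (Y ω, Z ω)) - P.H Z := by
    simp only [H_eq_sum, ← Finset.sum_add_distrib, ← Finset.sum_sub_distrib]
    refine Finset.sum_congr rfl fun ω _ => ?_
    rcases (P.nonneg ω).eq_or_lt with h0 | hω
    · simp [← h0]
    · have hXZ := hpos (fun ω => (X ω, Z ω)) hω
      have hYZ := hpos (fun ω => (Y ω, Z ω)) hω
      rw [Real.logb_div (mul_pos hXZ hYZ).ne' (hpos Z hω).ne', Real.logb_mul hXZ.ne' hYZ.ne']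
      ring
  simp only [condH]
  linarith

end Entropy

section ConditionalEntropy

variable {δ : Type} [Fintype α] [DecidableEq α] [Fintype β] [DecidableEq β]
  [Fintype γ] [DecidableEq γ] [Fintype δ] [DecidableEq δ]

theorem condH_nonneg (X : P.Ω → α) (Y : P.Ω → β) : 0 ≤ P.condH X Y :=
  sub_nonneg.2 <| P.H_mono fun _ _ h => (Prod.ext_iff.1 h).2

theorem condH_eq_zero {X : P.Ω → α} {Y : P.Ω → β} (h : X.FactorsThrough Y) : P.condH X Y = 0 :=
  sub_eq_zero.2 <| P.H_congr fun ω ω' => by simpa using @h ω ω'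

theorem condH_mono {X : P.Ω → α} {X' : P.Ω → β} {Y : P.Ω → γ} {Y' : P.Ω → δ}
    (hX : X.FactorsThrough X') (hY : Y.FactorsThrough Y') : P.condH X Y' ≤ P.condH X' Y := by
  have hleft : P.condH X Y' ≤ P.condH X' Y' := by
    refine sub_le_sub_right (P.H_mono fun ω ω' h => ?_) _
    simp only [Prod.mk.injEq] at h ⊢
    exact h.imp_left fun h => hX h
  have hpair (ω ω' : P.Ω) : Y' ω = Y' ω' ↔ (Y' ω, Y ω) = (Y' ω', Y ω') := by
    rw [Prod.mk.injEq]
    exact (and_iff_left_of_imp fun h => hY h).symm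
  have hright : P.condH X' Y' = P.condH X' (fun ω => (Y' ω, Y ω)) :=
    congrArg₂ (· - ·)
      (P.H_congr fun ω ω' => by rw [Prod.mk.injEq, Prod.mk.injEq, hpair])
      (P.H_congr hpair)
  exact hleft.trans (hright.trans_le (P.condH_prodMk_right_le X' Y' Y))

theorem condH_prodMk_left (X : P.Ω → α) (Y : P.Ω → β) (Z : P.Ω → γ) :
    P.condH (fun ω => (X ω, Y ω)) Z = P.condH X (fun ω => (Y ω, Z ω)) + P.condH Y Z := by
  have hassoc : P.H (fun ω => ((X ω, Y ω), Z ω)) = P.H (fun ω => (X ω, Y ω, Z ω)) :=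
    P.H_congr fun ω ω' => by simp [and_assoc]
  simp only [condH, hassoc]
  ring

theorem condH_const_right (X : P.Ω → α) (b : β) : P.condH X (fun _ => b) = P.H X := by
  rw [condH, H_const, sub_zero]
  exact P.H_congr fun ω ω' => by simp

theorem condH_le_H (X : P.Ω → α) (Y : P.Ω → β) : P.condH X Y ≤ P.H X :=
  (P.condH_mono .rfl fun _ _ _ => rfl).trans_eq (P.condH_const_right X ())

end ConditionalEntropy

section Families

variable {ι V : Type}

/-- The tuple random variable `(X_i)_{i ∈ s}` of the members of a family indexed by a finite set
`s`; its values are functions on the subtype `{i // i ∈ s}`, as in the field `LDC.decodes`. -/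
def subtuple (X : ι → P.Ω → V) (s : Finset ι) : P.Ω → {i // i ∈ s} → V :=
  P.tuple fun i : {i // i ∈ s} => X i.1

theorem subtuple_eq_iff {X : ι → P.Ω → V} {s : Finset ι} {ω ω' : P.Ω} :
    P.subtuple X s ω = P.subtuple X s ω' ↔ ∀ i ∈ s, X i ω = X i ω' := by
  simp [subtuple, tuple, funext_iff]

theorem factorsThrough_subtuple (X : ι → P.Ω → V) {s : Finset ι} {i : ι} (hi : i ∈ s) :
    (X i).FactorsThrough (P.subtuple X s) :=
  fun _ _ h => P.subtuple_eq_iff.1 h i hi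

theorem subtuple_factorsThrough_subtuple (X : ι → P.Ω → V) {s t : Finset ι} (hst : s ⊆ t) :
    (P.subtuple X s).FactorsThrough (P.subtuple X t) :=
  fun _ _ h => P.subtuple_eq_iff.2 fun i hi => P.subtuple_eq_iff.1 h i (hst hi)

variable [DecidableEq ι] [Fintype V] [DecidableEq V]

theorem condH_subtuple_le_sum [Fintype β] [DecidableEq β] (X : ι → P.Ω → V) (Y : P.Ω → β)
    (s : Finset ι) : P.condH (P.subtuple X s) Y ≤ ∑ i ∈ s, P.condH (X i) Y := by
  induction s using Finset.induction_on with
  | empty =>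
    exact (P.condH_eq_zero fun ω ω' _ => P.subtuple_eq_iff.2 (by simp)).le
  | insert i s hi ih =>
    have hsplit : (P.subtuple X (insert i s)).FactorsThrough (fun ω => (X i ω, P.subtuple X s ω)) :=
      fun ω ω' h => by simpa [subtuple_eq_iff] using h
    calc P.condH (P.subtuple X (insert i s)) Y
        ≤ P.condH (fun ω => (X i ω, P.subtuple X s ω)) Y := P.condH_mono hsplit .rfl
      _ = P.condH (X i) (fun ω => (P.subtuple X s ω, Y ω)) + P.condH (P.subtuple X s) Y :=
          P.condH_prodMk_left _ _ _
      _ ≤ P.condH (X i) Y + ∑ j ∈ s, P.condH (X j) Y :=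
          add_le_add (P.condH_prodMk_right_le _ _ _) ih
      _ = ∑ j ∈ insert i s, P.condH (X j) Y := by rw [Finset.sum_insert hi]

theorem H_subtuple_le_sum (X : ι → P.Ω → V) (s : Finset ι) :
    P.H (P.subtuple X s) ≤ ∑ i ∈ s, P.H (X i) := by
  simpa only [condH_const_right] using P.condH_subtuple_le_sum X (fun _ => ()) s

variable {P} [Fintype ι] {X : ι → P.Ω → V}

theorem iIndep.H_tuple (h : P.iIndep X) : P.H (P.tuple X) = ∑ i, P.H (X i) := by
  simp only [H_eq_sum]
  rw [Finset.sum_comm]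
  refine Finset.sum_congr rfl fun ω _ => ?_
  rcases (P.nonneg ω).eq_or_lt with h0 | hpos
  · simp [← h0]
  · rw [h, ← Finset.mul_sum, Finset.sum_neg_distrib, Real.logb_prod]
    · rfl
    · exact fun i _ => (hpos.trans_le (P.le_prob_apply (X i) ω)).ne'

theorem iIndep.condH_subtuple (h : P.iIndep X) {i : ι} {s : Finset ι} (hi : i ∉ s) :
    P.condH (X i) (P.subtuple X s) = P.H (X i) := by
  refine le_antisymm (P.condH_le_H _ _) ?_
  have hjoint : P.H (fun ω => (X i ω, P.subtuple X (Finset.univ.erase i) ω)) =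
      P.H (X i) + ∑ j ∈ Finset.univ.erase i, P.H (X j) := by
    rw [Finset.add_sum_erase _ (fun j => P.H (X j)) (Finset.mem_univ i), ← h.H_tuple]
    refine P.H_congr fun ω ω' => ?_
    rw [Prod.mk.injEq, subtuple_eq_iff,
      ← Finset.forall_mem_insert i (Finset.univ.erase i) fun j => X j ω = X j ω',
      Finset.insert_erase (Finset.mem_univ i)]
    simp [tuple, funext_iff]
  calc P.H (X i) ≤ P.condH (X i) (P.subtuple X (Finset.univ.erase i)) := by
        rw [condH, hjoint]
        linarith [P.H_subtuple_le_sum X (Finset.univ.erase i)]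
    _ ≤ P.condH (X i) (P.subtuple X s) :=
        P.condH_mono .rfl <| P.subtuple_factorsThrough_subtuple X <|
          Finset.subset_erase.2 ⟨Finset.subset_univ s, hi⟩

end Families

end FinProbSpace

namespace LDC

variable {K N M : ℕ} {Lw Lx : ℝ} (C : LDC K N M Lw Lx)

/-- The entropy `H(X_m | W_k, k ∈ Z)` that the coded symbol `m` retains once the source symbols in
`Z` are known. -/
def residualH (Z : Finset (Fin K)) (m : Fin M) : ℝ :=
  C.P.condH (C.X m) (C.P.subtuple C.W Z)

theorem add_residualH_insert_le_sum {k : Fin K} {Z : Finset (Fin K)} (hk : k ∉ Z)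
    {S : Finset (Fin M)} (hS : S ∈ C.decSets k) {m : Fin M} (hm : m ∈ S) :
    Lw + C.residualH (insert k Z) m ≤ ∑ i ∈ S, C.residualH Z i := by
  let WZ := C.P.subtuple C.W Z
  let XS := C.P.subtuple C.X S
  have hinsert : (fun ω => (C.W k ω, WZ ω)).FactorsThrough (C.P.subtuple C.W (insert k Z)) :=
    fun ω ω' h => by simpa [WZ, FinProbSpace.subtuple_eq_iff] using h
  have hdecode : C.P.condH (C.W k) (fun ω => (XS ω, WZ ω)) ≤ 0 :=
    (C.P.condH_mono .rfl fun _ _ h => (Prod.ext_iff.1 h).1).trans_eq (C.decodes k S hS)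
  calc Lw + C.residualH (insert k Z) m
      = C.residualH (insert k Z) m + C.P.condH (C.W k) WZ := by
        rw [C.indep.condH_subtuple hk, C.HW, add_comm]
    _ ≤ C.P.condH XS (fun ω => (C.W k ω, WZ ω)) + C.P.condH (C.W k) WZ :=
        add_le_add_left (C.P.condH_mono (C.P.factorsThrough_subtuple C.X hm) hinsert) _
    _ = C.P.condH (fun ω => (XS ω, C.W k ω)) WZ := (C.P.condH_prodMk_left _ _ _).symm
    _ ≤ C.P.condH (fun ω => (C.W k ω, XS ω)) WZ := C.P.condH_mono (fun _ _ h => by simp_all) .rfl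
    _ = C.P.condH (C.W k) (fun ω => (XS ω, WZ ω)) + C.P.condH XS WZ := C.P.condH_prodMk_left _ _ _
    _ ≤ C.P.condH XS WZ := add_le_of_nonpos_left hdecode
    _ ≤ ∑ i ∈ S, C.residualH Z i := C.P.condH_subtuple_le_sum C.X WZ S

variable {C}

theorem IsUniversal.exists_div_le_residualH (hC : C.IsUniversal) {k : Fin K} {Z : Finset (Fin K)}
    (hk : k ∉ Z) (m : Fin M) :
    ∃ i, (Lw + C.residualH (insert k Z) m) / N ≤ C.residualH Z i := by
  obtain ⟨S, hS, hm⟩ := hC m k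
  have hcard : (S.card : ℝ) = N := congrArg Nat.cast (C.decSets_card k S hS)
  have hcard0 : (S.card : ℝ) ≠ 0 := Nat.cast_ne_zero.2 (Finset.card_ne_zero_of_mem hm)
  obtain ⟨i, -, hi⟩ := Finset.exists_le_of_sum_le ⟨m, hm⟩ (calc
    ∑ _i ∈ S, (Lw + C.residualH (insert k Z) m) / N = Lw + C.residualH (insert k Z) m := by
      rw [Finset.sum_const, nsmul_eq_mul, ← hcard, mul_div_cancel₀ _ hcard0]
    _ ≤ ∑ i ∈ S, C.residualH Z i := C.add_residualH_insert_le_sum hk hS hm)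
  exact ⟨i, hi⟩

theorem IsUniversal.exists_geom_sum_le_residualH_compl [Nonempty (Fin M)] (hC : C.IsUniversal)
    (T : Finset (Fin K)) :
    ∃ m, Lw / N * ∑ j ∈ Finset.range T.card, (1 / (N : ℝ)) ^ j ≤ C.residualH Tᶜ m := by
  induction T using Finset.induction_on with
  | empty =>
    obtain ⟨m⟩ := ‹Nonempty (Fin M)›
    exact ⟨m, by simpa [residualH] using C.P.condH_nonneg (C.X m) _⟩
  | insert k T hk ih =>
    obtain ⟨m, hm⟩ := ih
    obtain ⟨i, hi⟩ := hC.exists_div_le_residualH (k := k) (Z := (insert k T)ᶜ) (by simp) m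
    have hcompl : insert k (insert k T)ᶜ = Tᶜ := by
      rw [Finset.compl_insert, Finset.insert_erase (by simpa using hk)]
    refine ⟨i, le_trans ?_ hi⟩
    rw [hcompl, Finset.card_insert_of_notMem hk, geom_sum_succ]
    calc _ = (Lw + Lw / N * ∑ j ∈ Finset.range T.card, (1 / (N : ℝ)) ^ j) / N := by ring
      _ ≤ (Lw + C.residualH Tᶜ m) / N := by gcongr

theorem IsUniversal.rate_le_Cstar (hC : C.IsUniversal) (hK : 1 ≤ K) (hN : 1 ≤ N) (hLx : 0 < Lx) :
    Lw / Lx ≤ Cstar N K := by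
  have : Nonempty (Fin M) := by
    obtain ⟨S, hS⟩ := C.decSets_nonempty ⟨0, hK⟩
    obtain ⟨m, -⟩ := Finset.card_pos.1 (hN.trans_eq (C.decSets_card _ S hS).symm)
    exact ⟨m⟩
  obtain ⟨m, hm⟩ := hC.exists_geom_sum_le_residualH_compl Finset.univ
  have hbound : Lw / N * ∑ j ∈ Finset.range K, (1 / (N : ℝ)) ^ j ≤ Lx := by
    simpa using hm.trans ((C.P.condH_le_H _ _).trans_eq (C.HX m))
  have hN0 : (0 : ℝ) < N := by exact_mod_cast hN
  have hgeom : 0 < ∑ j ∈ Finset.range K, (1 / (N : ℝ)) ^ j :=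
    geom_sum_pos (by positivity) (by omega)
  rw [Cstar, div_le_div_iff₀ hLx hgeom]
  rwa [div_mul_eq_mul_div, div_le_iff₀' hN0] at hbound

end LDC

namespace FinProbSpace

section Uniform

/-- The uniform distribution on a nonempty finite type. -/
def uniform (Ω : Type) [Fintype Ω] [Nonempty Ω] : FinProbSpace where
  Ω := Ω
  p _ := (Fintype.card Ω : ℝ)⁻¹
  nonneg _ := by positivity
  sum_one := by simp

variable {G A : Type} [AddGroup G] [Fintype G] [AddGroup A] [Fintype A] [DecidableEq A]

theorem prob_uniform_of_surjective (f : G →+ A) (hf : Function.Surjective f) (a : A) :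
    (uniform G).prob f a = (Fintype.card A : ℝ)⁻¹ := by
  have hconst (b : A) : (uniform G).prob f b = (uniform G).prob f a := by
    obtain ⟨g, hg⟩ := hf (-b + a)
    have hshift (x : G) : f x = b ↔ f (x + g) = a := by
      rw [map_add, hg, ← add_assoc, add_eq_right, ← sub_eq_add_neg, sub_eq_zero]
    exact Fintype.sum_equiv (Equiv.addRight g) _ _ fun x => if_congr (hshift x) rfl rfl
  have hsum := (uniform G).sum_prob (f : G → A)
  simp only [hconst, Finset.sum_const, Finset.card_univ, nsmul_eq_mul] at hsum
  exact eq_inv_of_mul_eq_one_right hsum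

theorem H_uniform_of_surjective (f : G →+ A) (hf : Function.Surjective f) :
    (uniform G).H f = Real.logb 2 (Fintype.card A) := by
  simp [H, prob_uniform_of_surjective f hf]

theorem iIndep_uniform_apply {ι : Type} [Fintype ι] [DecidableEq ι] :
    (uniform (ι → A)).iIndep fun (i : ι) (w : ι → A) => w i := by
  intro a
  have heval (i : ι) : (uniform (ι → A)).prob (fun w : ι → A => w i) (a i) =
      (Fintype.card A : ℝ)⁻¹ :=
    prob_uniform_of_surjective (Pi.evalAddMonoidHom (fun _ => A) i) (Function.surjective_eval i) _
  calc (uniform (ι → A)).prob (id : (ι → A) → ι → A) a = (Fintype.card (ι → A) : ℝ)⁻¹ :=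
        prob_uniform_of_surjective (AddMonoidHom.id (ι → A)) Function.surjective_id a
    _ = ∏ i, (uniform (ι → A)).prob (fun w : ι → A => w i) (a i) := by simp [heval]

end Uniform

end FinProbSpace

section GridSymbols

variable {ι G A : Type} [Fintype ι] [AddGroup G] [AddCommGroup A]

/-- The answer at the grid point `s` of the Tian–Sun–Chen code: the sum over `k` of the letter of
the word `b k` at position `s k`. Words have no letter at position `0`, where they are extended by
zero. -/
def selectedSum (s : ι → G) : (ι → {j : G // j ≠ 0} → A) →+ A :=
  ∑ k, (Pi.evalAddMonoidHom (fun _ : G => A) (s k)).comp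
    ((Function.ExtendByZero.hom A Subtype.val).comp (Pi.evalAddMonoidHom _ k))

theorem selectedSum_apply (s : ι → G) (b : ι → {j : G // j ≠ 0} → A) :
    selectedSum s b = ∑ k, Function.extend Subtype.val (b k) 0 (s k) := by
  simp [selectedSum]

theorem selectedSum_zero (b : ι → {j : G // j ≠ 0} → A) : selectedSum 0 b = 0 := by
  simp [selectedSum_apply]

theorem selectedSum_surjective {s : ι → G} (hs : s ≠ 0) :
    Function.Surjective (selectedSum s : (ι → {j : G // j ≠ 0} → A) →+ A) := by
  classical
  intro a
  obtain ⟨k, hk⟩ := Function.ne_iff.1 hs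
  refine ⟨Pi.single k fun _ => a, ?_⟩
  rw [selectedSum_apply, Fintype.sum_eq_single k]
  · simpa using Subtype.val_injective.extend_apply (fun _ => a) (0 : G → A)
      (⟨s k, hk⟩ : {j : G // j ≠ 0})
  · intro i hi
    simp [hi, Function.extend]

/-- The coded symbol at the grid point `q`. A source symbol consists of one word for every
translate `t` of the grid, and the coded symbol collects the answers at the points `s = t + q` of
the copies `t = s - q`, omitting `s = 0`, where the answer vanishes. -/
def gridSymbol (q : ι → G) :
    (ι → (ι → G) → {j : G // j ≠ 0} → A) →+ ({s : ι → G // s ≠ 0} → A) :=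
  AddMonoidHom.mk' (fun w s => selectedSum s.1 fun k => w k (s.1 - q)) fun w w' =>
    funext fun s => map_add (selectedSum s.1) (fun k => w k (s.1 - q)) fun k => w' k (s.1 - q)

theorem gridSymbol_apply (q : ι → G) (w : ι → (ι → G) → {j : G // j ≠ 0} → A)
    (s : {s : ι → G // s ≠ 0}) :
    gridSymbol q w s = selectedSum s.1 fun k => w k (s.1 - q) := rfl

theorem gridSymbol_surjective (q : ι → G) :
    Function.Surjective
      (gridSymbol q : (ι → (ι → G) → {j : G // j ≠ 0} → A) →+ ({s : ι → G // s ≠ 0} → A)) := by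
  classical
  intro y
  choose b hb using fun s : {s : ι → G // s ≠ 0} => selectedSum_surjective s.2 (y s)
  refine ⟨fun k t => if h : t + q ≠ 0 then b ⟨t + q, h⟩ k else 0, funext fun s => ?_⟩
  simpa [gridSymbol_apply, s.2] using hb s

theorem selectedSum_eq_of_gridSymbol_eq {q : ι → G} {w w' : ι → (ι → G) → {j : G // j ≠ 0} → A}
    (h : gridSymbol q w = gridSymbol q w') (t : ι → G) :
    selectedSum (t + q) (fun k => w k t) = selectedSum (t + q) fun k => w' k t := by
  by_cases ht : t + q = 0
  · rw [ht, selectedSum_zero, selectedSum_zero]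
  · simpa [gridSymbol_apply] using congrFun h ⟨t + q, ht⟩

variable [DecidableEq ι]

theorem selectedSum_update_sub_update_zero (s : ι → G) (k : ι) (j : {j : G // j ≠ 0})
    (b : ι → {j : G // j ≠ 0} → A) :
    selectedSum (Function.update s k j) b - selectedSum (Function.update s k 0) b = b k j := by
  rw [selectedSum_apply, selectedSum_apply, ← Finset.sum_sub_distrib, Fintype.sum_eq_single k]
  · simp
  · intro i hi
    simp [hi]

theorem eq_of_gridSymbol_update_eq (q : ι → G) (k : ι)
    {w w' : ι → (ι → G) → {j : G // j ≠ 0} → A}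
    (h : ∀ j, gridSymbol (Function.update q k j) w = gridSymbol (Function.update q k j) w') :
    w k = w' k := by
  ext t j
  have hline (i : G) : selectedSum (Function.update (t + q) k i) (fun k => w k t) =
      selectedSum (Function.update (t + q) k i) fun k => w' k t := by
    have hpoint : t + Function.update q k (-t k + i) = Function.update (t + q) k i := by
      ext l
      by_cases hl : l = k
      · subst hl; simp
      · simp [hl]
    rw [← hpoint]
    exact selectedSum_eq_of_gridSymbol_eq (h _) t
  rw [← selectedSum_update_sub_update_zero (t + q) k j fun k => w k t, hline, hline,
    selectedSum_update_sub_update_zero]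

end GridSymbols

section GridCode

variable (K : ℕ) (G A : Type) [AddGroup G] [Fintype G] [DecidableEq G]

/-- The universal code of rate `Cstar`. Its coded symbols are indexed by the grid `G ^ K`, through
an enumeration of the grid, and the decoding sets of source symbol `k` are the lines in
direction `k`. -/
def gridCode [AddCommGroup A] [Fintype A] [DecidableEq A] :
    LDC K (Fintype.card G) (Fintype.card (Fin K → G))
      (Real.logb 2 (Fintype.card ((Fin K → G) → {j : G // j ≠ 0} → A)))
      (Real.logb 2 (Fintype.card ({s : Fin K → G // s ≠ 0} → A))) where
  P := FinProbSpace.uniform (Fin K → (Fin K → G) → {j : G // j ≠ 0} → A)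
  V := (Fin K → G) → {j : G // j ≠ 0} → A
  V' := {s : Fin K → G // s ≠ 0} → A
  W k w := w k
  X m := gridSymbol ((Fintype.equivFin (Fin K → G)).symm m)
  indep := FinProbSpace.iIndep_uniform_apply
  HW k := FinProbSpace.H_uniform_of_surjective
    (Pi.evalAddMonoidHom (fun _ => (Fin K → G) → {j : G // j ≠ 0} → A) k)
    (Function.surjective_eval k)
  coded_fn m := ⟨gridSymbol ((Fintype.equivFin (Fin K → G)).symm m), fun _ => rfl⟩
  HX m := FinProbSpace.H_uniform_of_surjective _ (gridSymbol_surjective _)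
  decSets k := Finset.univ.image fun q : Fin K → G =>
    Finset.univ.image fun j : G => Fintype.equivFin (Fin K → G) (Function.update q k j)
  decSets_nonempty k := Finset.univ_nonempty.image _
  decSets_card k s hs := by
    obtain ⟨q, -, rfl⟩ := Finset.mem_image.1 hs
    exact Finset.card_image_of_injective _
      ((Fintype.equivFin _).injective.comp (Function.update_injective q k))
  decodes k s hs := by
    obtain ⟨q, -, rfl⟩ := Finset.mem_image.1 hs
    refine FinProbSpace.condH_eq_zero _ fun w w' h => eq_of_gridSymbol_update_eq q k fun j => ?_
    have hj := congrFun h ⟨Fintype.equivFin (Fin K → G) (Function.update q k j),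
      Finset.mem_image_of_mem _ (Finset.mem_univ j)⟩
    simpa [FinProbSpace.tuple] using hj

theorem gridCode_isUniversal [AddCommGroup A] [Fintype A] [DecidableEq A] :
    (gridCode K G A).IsUniversal := by
  intro m k
  let q := (Fintype.equivFin (Fin K → G)).symm m
  refine ⟨_, Finset.mem_image_of_mem _ (Finset.mem_univ q),
    Finset.mem_image.2 ⟨q k, Finset.mem_univ _, ?_⟩⟩
  rw [Function.update_eq_self, Equiv.apply_symm_apply]

theorem logb_card_gridSource [Fintype A] :
    Real.logb 2 (Fintype.card ((Fin K → G) → {j : G // j ≠ 0} → A)) =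
      (Fintype.card G - 1) * (Fintype.card G : ℝ) ^ K * Real.logb 2 (Fintype.card A) := by
  have hcard : Fintype.card ((Fin K → G) → {j : G // j ≠ 0} → A) =
      Fintype.card A ^ ((Fintype.card G - 1) * Fintype.card G ^ K) := by
    simp [Fintype.card_subtype_compl, pow_mul]
  rw [hcard, Nat.cast_pow, Real.logb_pow]
  push_cast [Nat.cast_pred (Fintype.card_pos (α := G))]
  ring

theorem logb_card_gridSymbol [Fintype A] :
    Real.logb 2 (Fintype.card ({s : Fin K → G // s ≠ 0} → A)) =
      ((Fintype.card G : ℝ) ^ K - 1) * Real.logb 2 (Fintype.card A) := by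
  have hcard : Fintype.card ({s : Fin K → G // s ≠ 0} → A) =
      Fintype.card A ^ (Fintype.card G ^ K - 1) := by
    simp [Fintype.card_subtype_compl]
  rw [hcard, Nat.cast_pow, Real.logb_pow, Nat.cast_pred (pow_pos Fintype.card_pos K)]
  push_cast
  ring

end GridCode

theorem Cstar_eq_div {N : ℕ} (hN : 2 ≤ N) (K : ℕ) :
    Cstar N K = (N - 1) * (N : ℝ) ^ K / ((N : ℝ) ^ K - 1) := by
  have hN1 : (1 : ℝ) < N := by exact_mod_cast hN
  have hN0 : (N : ℝ) ≠ 0 := by positivity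
  have hgeom : ∑ j ∈ Finset.range K, (1 / (N : ℝ)) ^ j =
      N * ((N : ℝ) ^ K - 1) / ((N - 1) * (N : ℝ) ^ K) := by
    have hinv : (N : ℝ)⁻¹ ≠ 1 := by simpa using hN1.ne'
    rw [one_div, geom_sum_eq hinv, inv_pow,
      div_eq_div_iff (sub_ne_zero.2 hinv)
        (mul_ne_zero (sub_ne_zero.2 hN1.ne') (pow_ne_zero K hN0))]
    field_simp
    ring
  rw [Cstar, hgeom, div_div_eq_mul_div, mul_div_mul_left _ _ hN0]

theorem exists_isUniversal_rate_eq_Cstar {K : ℕ} (hK : 1 ≤ K) (G : Type) [AddGroup G] [Fintype G]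
    [Nontrivial G] :
    ∃ (M : ℕ) (Lw Lx : ℝ), 0 < Lw ∧ 0 < Lx ∧
      ∃ C : LDC K (Fintype.card G) M Lw Lx, C.IsUniversal ∧ Cstar (Fintype.card G) K = Lw / Lx := by
  classical
  have hG : (1 : ℝ) < Fintype.card G := by exact_mod_cast Fintype.one_lt_card
  have hpow : 1 < (Fintype.card G : ℝ) ^ K := one_lt_pow₀ hG (by omega)
  have hbit : Real.logb 2 (Fintype.card (ZMod 2)) = 1 := by simp [ZMod.card]
  refine ⟨_, _, _, ?_, ?_, gridCode K G (ZMod 2), gridCode_isUniversal K G (ZMod 2), ?_⟩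
  all_goals simp only [logb_card_gridSource, logb_card_gridSymbol, hbit, mul_one]
  · exact mul_pos (by linarith) (by linarith)
  · linarith
  · exact Cstar_eq_div Fintype.one_lt_card K

/-- Capacity of universal LDCs, Theorem 1: for `N ≥ 2`, `K ≥ 1`, the
supremum over all code lengths `M` and all ULDCs of the symbol rate `Lw / Lx` equals
`C*(N, K)`, and it is attained. -/
theorem uldc_capacity (K N : ℕ) (hK : 1 ≤ K) (hN : 2 ≤ N) :
    IsGreatest {r : ℝ | ∃ (M : ℕ) (Lw Lx : ℝ), 0 < Lw ∧ 0 < Lx ∧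
      ∃ C : LDC K N M Lw Lx, C.IsUniversal ∧ r = Lw / Lx} (Cstar N K) := by
  constructor
  · have : NeZero N := ⟨by omega⟩
    have : Fact (1 < N) := ⟨hN⟩
    have hattained := exists_isUniversal_rate_eq_Cstar hK (ZMod N)
    rwa [ZMod.card] at hattained
  · rintro r ⟨M, Lw, Lx, -, hLx, C, hC, rfl⟩
    exact hC.rate_le_Cstar hK (by omega) hLx
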